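/- arXiv:1811.08972 — 2 statements merged into one kernel-verified Lean document; each statement's English description precedes it below -/
import Mathlib

section
/- Let r ≥ 3 be an integer, let n ≥ 4, let T be a triangulation of the n-gon, let 1 ≤ i ≤ ⌈log_r n⌉, and let Ĥ be a connected component of Ŝ_i(T) containing at least one edge. Then the reduced tree H̃ of Ĥ has at most 2r − 1 leaves (nodes of degree one). -/
/-!
Each dual edge points from the triangle below a chord to the face above it, so along oriented steps
the interval `[lo, hi]` spanned by a face grows strictly. Heads and tails are unique because chords
of `T` do not cross; hence every node of the component of `ρ` flows to `ρ`
(`reflTransGen_of_reachable`).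

A kept node with both an incoming and an outgoing step has a reduced neighbour above it
(`exists_up`) and one below it (`exists_down`), so it is not a leaf of the reduced tree. Thus the
leaves are sources of the component, together with the added node if `ρ` has degree two, or with
`ρ` itself otherwise.

The intervals of two distinct sources do not overlap (`source_disjoint`): otherwise one is nested in
the other, and the oriented path from the inner one has to run through the outer one, which would
not be a source. Every source interval lies below one of the at most two chords entering `ρ`. Such
a chord has length at most `r ^ i`, while each source interval is longer than `r ^ (i - 1)`, so at
most `r - 1` sources lie below it. The total is at most `2 * (r - 1) + 1` if two chords enter `ρ`,
and `(r - 1) + 1` otherwise.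
-/

/-- `e` is a chord of the convex `n`-gon: a 2-element subset of `{0, …, n-1}`. -/
def IsChord (n : ℕ) (e : Finset ℕ) : Prop :=
  e.card = 2 ∧ ∀ x ∈ e, x < n

/-- `e` is a boundary edge of the `n`-gon, i.e. of the form `{i, (i+1) mod n}`. -/
def IsBoundaryEdge (n : ℕ) (e : Finset ℕ) : Prop :=
  ∃ i < n, e = ({i, (i + 1) % n} : Finset ℕ)

/-- `e` is a diagonal of the `n`-gon: a chord that is not a boundary edge. -/
def IsDiagonal (n : ℕ) (e : Finset ℕ) : Prop :=
  IsChord n e ∧ ¬ IsBoundaryEdge n e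

/-- Two chords `{a,b}` (`a<b`) and `{c,d}` (`c<d`) cross if `a<c<b<d` or `c<a<d<b`. -/
def Crosses (e f : Finset ℕ) : Prop :=
  ∃ a b c d : ℕ, a < b ∧ c < d ∧ e = ({a, b} : Finset ℕ) ∧ f = ({c, d} : Finset ℕ) ∧
    ((a < c ∧ c < b ∧ b < d) ∨ (c < a ∧ a < d ∧ d < b))

/-- `T` is a triangulation of the `n`-gon: the set of all `n` boundary edges together
with a maximal set of pairwise non-crossing diagonals. -/
def IsTriangulation (n : ℕ) (T : Finset (Finset ℕ)) : Prop :=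
  (∀ e ∈ T, IsChord n e) ∧
  (∀ i < n, ({i, (i + 1) % n} : Finset ℕ) ∈ T) ∧
  (∀ e ∈ T, ∀ f ∈ T, ¬ Crosses e f) ∧
  (∀ e, IsDiagonal n e → e ∉ T → ∃ f ∈ T, Crosses e f)

/-- The scale of the chord `{U, V}` with respect to the parameter `r`:
`σ_{UV} = ⌈log_r |U - V|⌉`. -/
noncomputable def scale (r : ℝ) (U V : ℕ) : ℤ :=
  ⌈Real.log |(U : ℝ) - (V : ℝ)| / Real.log r⌉

/-- `a b c` (with `a < b < c`) is a triangle of `T`: all three sides are chords of `T`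
(in a triangulation of a convex polygon they then bound a common face). -/
def IsTriangleOf (T : Finset (Finset ℕ)) (a b c : ℕ) : Prop :=
  a < b ∧ b < c ∧ ({a, b} : Finset ℕ) ∈ T ∧ ({b, c} : Finset ℕ) ∈ T ∧
    ({a, c} : Finset ℕ) ∈ T

/-- A face of (the plane drawing of) a triangulation of the `n`-gon: either a triangle,
recorded as an increasing triple of polygon vertices `Sum.inl (a, b, c)`, or the outer
face attached to the boundary edge `{i, (i+1) mod n}`, recorded as `Sum.inr i`. -/
abbrev Face : Type := (ℕ × ℕ × ℕ) ⊕ ℕ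

/-- The head of the oriented dual edge `ê` of the chord `e ∈ T`: the incident triangle
`UVW` (for `e = {U, V}`, `U < V`) whose third vertex `W` satisfies `W < U` or `W > V` if
it exists, and otherwise (which happens only for `e = {0, n-1}`) the outer face of `e`.
For a triangle `a < b < c` this means `e = {a, b}` or `e = {b, c}`. -/
def DualHead (n : ℕ) (T : Finset (Finset ℕ)) (e : Finset ℕ) (f : Face) : Prop :=
  (∃ a b c : ℕ, f = Sum.inl (a, b, c) ∧ IsTriangleOf T a b c ∧
    (e = ({a, b} : Finset ℕ) ∨ e = ({b, c} : Finset ℕ))) ∨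
  (f = Sum.inr (n - 1) ∧ e = ({0, n - 1} : Finset ℕ) ∧ e ∈ T)

/-- The tail of the oriented dual edge `ê` of the chord `e ∈ T`: for a triangle
`a < b < c` this means `e = {a, c}`; for the outer face of a boundary edge
`{i, i+1}` with `i < n-1` it means `e = {i, i+1}`. -/
def DualTail (n : ℕ) (T : Finset (Finset ℕ)) (e : Finset ℕ) (f : Face) : Prop :=
  (∃ a b c : ℕ, f = Sum.inl (a, b, c) ∧ IsTriangleOf T a b c ∧
    e = ({a, c} : Finset ℕ)) ∨
  (∃ i : ℕ, f = Sum.inr i ∧ i < n - 1 ∧ e = ({i, i + 1} : Finset ℕ) ∧ e ∈ T)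

/-- The dual edge `ê` of `e` is a left turn: its head is a triangle `UVW` with `W < U`,
i.e. `e = {b, c}` for a triangle `a < b < c` of `T`. -/
def LeftTurnEdge (T : Finset (Finset ℕ)) (e : Finset ℕ) : Prop :=
  ∃ a b c : ℕ, IsTriangleOf T a b c ∧ e = ({b, c} : Finset ℕ)

/-- The dual edge `ê` of `e` is a right turn: its head is a triangle `UVW` with `W > V`,
i.e. `e = {a, b}` for a triangle `a < b < c` of `T`. -/
def RightTurnEdge (T : Finset (Finset ℕ)) (e : Finset ℕ) : Prop :=
  ∃ a b c : ℕ, IsTriangleOf T a b c ∧ e = ({a, b} : Finset ℕ)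

/-- One oriented step in the dual subgraph `Ŝ`: from the tail to the head of the dual
edge of some `e ∈ S`. -/
def DualStep (n : ℕ) (T S : Finset (Finset ℕ)) (f f' : Face) : Prop :=
  ∃ e ∈ S, DualTail n T e f ∧ DualHead n T e f'

open Classical in
/-- `g_S(v)`: the number of left-turn edges on the path in `Ŝ` from `v` to the root of
its component (the edges of this path are exactly the `ê`, `e ∈ S`, whose tail is
reachable from `v` by oriented steps in `Ŝ`). -/
noncomputable def gCount (n : ℕ) (T S : Finset (Finset ℕ)) (v : Face) : ℕ :=
  (S.filter (fun e => LeftTurnEdge T e ∧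
    ∃ f : Face, DualTail n T e f ∧ Relation.ReflTransGen (DualStep n T S) v f)).card

open Classical in
/-- `d_S(v)`: the number of right-turn edges on the path in `Ŝ` from `v` to the root of
its component. -/
noncomputable def dCount (n : ℕ) (T S : Finset (Finset ℕ)) (v : Face) : ℕ :=
  (S.filter (fun e => RightTurnEdge T e ∧
    ∃ f : Face, DualTail n T e f ∧ Relation.ReflTransGen (DualStep n T S) v f)).card

/-- For a chord `e = {U, V}`, `chordGap e = |U - V|`. -/
def chordGap (e : Finset ℕ) : ℕ :=
  e.sup id - (e.sum id - e.sup id)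

/-- The scale `σ_e = ⌈log_r |U - V|⌉` of a chord `e = {U, V}`. -/
noncomputable def chordScale (r : ℝ) (e : Finset ℕ) : ℤ :=
  ⌈Real.log (chordGap e : ℝ) / Real.log r⌉

/-- `S_i(T) = {e ∈ T : σ_e = i}`, the chords of `T` of scale `i`. -/
noncomputable def scaleSubset (r : ℝ) (T : Finset (Finset ℕ)) (i : ℕ) : Finset (Finset ℕ) :=
  T.filter (fun e => chordScale r e = (i : ℤ))

/-- All potential faces of a triangulation of the `n`-gon (triples that are not
increasing triangles of `T` are junk nodes with no incident dual edges). -/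
def allFaces (n : ℕ) : Finset Face :=
  ((Finset.range n ×ˢ Finset.range n ×ˢ Finset.range n).image Sum.inl) ∪
    ((Finset.range n).image Sum.inr)

/-- `G(T) = Σ_{i=1}^{⌈log_r n⌉} Σ_{v ∈ V(T̂)} g_{S_i(T)}(v)`. -/
noncomputable def GCount (r : ℝ) (n : ℕ) (T : Finset (Finset ℕ)) : ℕ :=
  ∑ i ∈ Finset.Icc 1 ⌈Real.log (n : ℝ) / Real.log r⌉₊,
    ∑ v ∈ allFaces n, gCount n T (scaleSubset r T i) v

/-- `D(T) = Σ_{i=1}^{⌈log_r n⌉} Σ_{v ∈ V(T̂)} d_{S_i(T)}(v)`. -/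
noncomputable def DCount (r : ℝ) (n : ℕ) (T : Finset (Finset ℕ)) : ℕ :=
  ∑ i ∈ Finset.Icc 1 ⌈Real.log (n : ℝ) / Real.log r⌉₊,
    ∑ v ∈ allFaces n, dCount n T (scaleSubset r T i) v

/-- The dual subgraph `Ŝ` of the dual tree `T̂`, as an (undirected) simple graph on the
faces: `f` and `f'` are adjacent iff they are the two endpoints of the dual edge of some
chord `e ∈ S`. -/
def dualGraph (n : ℕ) (T S : Finset (Finset ℕ)) : SimpleGraph Face :=
  SimpleGraph.fromRel (fun f f' => ∃ e ∈ S, DualTail n T e f ∧ DualHead n T e f')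

open Classical in
/-- The degree of the node `v` in `Ŝ`: the number of chords of `S` whose dual edge is
incident to `v`. -/
noncomputable def hatDegree (n : ℕ) (T S : Finset (Finset ℕ)) (v : Face) : ℕ :=
  (S.filter (fun e => DualTail n T e v ∨ DualHead n T e v)).card

open Classical in
/-- The in-degree of the node `v` in `Ŝ`: the number of chords of `S` whose dual edge
has head `v`. -/
noncomputable def hatInDegree (n : ℕ) (T S : Finset (Finset ℕ)) (v : Face) : ℕ :=
  (S.filter (fun e => DualHead n T e v)).card

/-- A node of the component `Ĥ` of `Ŝ` containing `v₀` (with root `ρ`) that is kept when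
forming the reduced tree `H̃`: a node of `Ĥ` whose degree is not `2`, or the root `ρ`
itself (if `ρ` has degree `2`, a new node is attached to it before suppression, so it is
kept). -/
def ReducedKept (n : ℕ) (T S : Finset (Finset ℕ)) (v₀ ρ u : Face) : Prop :=
  (dualGraph n T S).Reachable v₀ u ∧ (hatDegree n T S u ≠ 2 ∨ u = ρ)

/-- The adjacency relation of the reduced tree `H̃` of the component `Ĥ` of `Ŝ`
containing `v₀`, with root `ρ`.  Its nodes are the kept nodes of `Ĥ` together with
(if `ρ` has exactly two in-neighbours, i.e. degree `2`) one extra node `Sum.inr ()`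
attached to `ρ`; two kept nodes are adjacent iff they are joined in `Ĥ` by a path all
of whose internal nodes are suppressed (degree exactly `2`, and not `ρ`). -/
def ReducedAdj (n : ℕ) (T S : Finset (Finset ℕ)) (v₀ ρ : Face)
    (x y : Face ⊕ Unit) : Prop :=
  (∃ u w : Face, x = Sum.inl u ∧ y = Sum.inl w ∧ u ≠ w ∧
    ReducedKept n T S v₀ ρ u ∧ ReducedKept n T S v₀ ρ w ∧
    ∃ p : (dualGraph n T S).Walk u w, p.IsPath ∧
      ∀ v ∈ p.support, v = u ∨ v = w ∨ (hatDegree n T S v = 2 ∧ v ≠ ρ)) ∨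
  (hatDegree n T S ρ = 2 ∧
    ((x = Sum.inl ρ ∧ (∃ u : Unit, y = Sum.inr u)) ∨
     (y = Sum.inl ρ ∧ (∃ u : Unit, x = Sum.inr u))))

/-- A leaf of the reduced tree `H̃`: a node with exactly one neighbour. -/
def IsReducedLeaf (n : ℕ) (T S : Finset (Finset ℕ)) (v₀ ρ : Face)
    (x : Face ⊕ Unit) : Prop :=
  ∃! y : Face ⊕ Unit, ReducedAdj n T S v₀ ρ x y

/-! ### Chords and triangles -/

lemma pair_eq_pair {a b c d : ℕ} (hab : a < b) (hcd : c < d)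
    (h : ({a, b} : Finset ℕ) = {c, d}) : a = c ∧ b = d := by
  have h1 : a ∈ ({c, d} : Finset ℕ) := h ▸ (by simp)
  have h2 : b ∈ ({c, d} : Finset ℕ) := h ▸ (by simp)
  have h3 : c ∈ ({a, b} : Finset ℕ) := h ▸ (by simp)
  simp only [Finset.mem_insert, Finset.mem_singleton] at h1 h2 h3
  omega

lemma IsTriangulation.not_cross {n : ℕ} {T : Finset (Finset ℕ)} (hT : IsTriangulation n T)
    {a b c d : ℕ} (h1 : ({a, b} : Finset ℕ) ∈ T) (h2 : ({c, d} : Finset ℕ) ∈ T)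
    (hac : a < c) (hcb : c < b) (hbd : b < d) : False :=
  hT.2.2.1 _ h1 _ h2 ⟨a, b, c, d, by omega, by omega, rfl, rfl, Or.inl ⟨hac, hcb, hbd⟩⟩

lemma IsTriangulation.lt {n : ℕ} {T : Finset (Finset ℕ)} (hT : IsTriangulation n T)
    {a b : ℕ} (h : ({a, b} : Finset ℕ) ∈ T) : b < n :=
  (hT.1 _ h).2 b (by simp)

lemma IsTriangulation.eq_pair {n : ℕ} {T : Finset (Finset ℕ)} (hT : IsTriangulation n T)
    {e : Finset ℕ} (h : e ∈ T) : ∃ a b, a < b ∧ e = {a, b} := by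
  obtain ⟨x, y, hxy, rfl⟩ := Finset.card_eq_two.1 (hT.1 _ h).1
  rcases lt_or_gt_of_ne hxy with h | h
  · exact ⟨x, y, h, rfl⟩
  · exact ⟨y, x, h, Finset.pair_comm _ _⟩

lemma IsTriangulation.boundary {n : ℕ} {T : Finset (Finset ℕ)} (hT : IsTriangulation n T)
    {a : ℕ} (h : a + 1 < n) : ({a, a + 1} : Finset ℕ) ∈ T := by
  have := hT.2.1 a (by omega)
  rwa [Nat.mod_eq_of_lt h] at this

/-- Every chord of length at least two is the long side of a triangle; this is where maximality
of the triangulation is used. -/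
lemma IsTriangulation.exists_triangle {n : ℕ} {T : Finset (Finset ℕ)} (hT : IsTriangulation n T)
    {x y : ℕ} (h : ({x, y} : Finset ℕ) ∈ T) (hxy : x + 2 ≤ y) :
    ∃ m, IsTriangleOf T x m y := by
  classical
  have hyn := hT.lt h
  -- The apex is the largest vertex strictly below `y` that is joined to `x`.
  let A := (Finset.range y).filter fun m => x < m ∧ ({x, m} : Finset ℕ) ∈ T
  have hA : A.Nonempty := ⟨x + 1, by
    simp only [A, Finset.mem_filter, Finset.mem_range]
    exact ⟨by omega, by omega, hT.boundary (by omega)⟩⟩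
  obtain ⟨m, hmA, hmax⟩ := A.exists_max_image id hA
  simp only [A, Finset.mem_filter, Finset.mem_range, id] at hmA hmax
  obtain ⟨hmy, hxm, hmT⟩ := hmA
  refine ⟨m, hxm, hmy, hmT, ?_, h⟩
  by_contra hnot
  have hdiag : IsDiagonal n {m, y} := by
    refine ⟨⟨Finset.card_pair (by omega), ?_⟩, ?_⟩
    · intro z hz
      simp only [Finset.mem_insert, Finset.mem_singleton] at hz
      omega
    · rintro ⟨j, hj, he⟩
      exact hnot (he ▸ hT.2.1 j hj)
  obtain ⟨f, hf, a, b, c, d, hab, hcd, he, rfl, hcr⟩ := hT.2.2.2 _ hdiag hnot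
  obtain ⟨rfl, rfl⟩ := pair_eq_pair hmy hab he
  rcases hcr with ⟨h1, h2, h3⟩ | ⟨h1, h2, h3⟩
  · exact hT.not_cross h hf (by omega) h2 h3
  · rcases lt_trichotomy x c with hc | rfl | hc
    · exact hT.not_cross hmT hf hc h1 h2
    · have := hmax d ⟨h3, hcd, hf⟩
      omega
    · exact hT.not_cross hf h hc (by omega) h3

lemma triangle_unique {n : ℕ} {T : Finset (Finset ℕ)} (hT : IsTriangulation n T)
    {a b b' c : ℕ} (h : IsTriangleOf T a b c) (h' : IsTriangleOf T a b' c) : b = b' := by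
  obtain ⟨h1, h2, h3, h4, h5⟩ := h
  obtain ⟨h1', h2', h3', h4', h5'⟩ := h'
  rcases lt_trichotomy b b' with hb | hb | hb
  · exact (hT.not_cross h3' h4 h1 hb h2').elim
  · exact hb
  · exact (hT.not_cross h3 h4' h1' hb h2).elim

/-- The endpoints of a chord `{a, c}` of scale `i` satisfy `r ^ (i - 1) < c - a ≤ r ^ i`. -/
lemma gap_of_mem_scaleSubset {r i : ℕ} (hr : 3 ≤ r) (hi : 1 ≤ i) {T : Finset (Finset ℕ)}
    {a c : ℕ} (hac : a < c) (h : ({a, c} : Finset ℕ) ∈ scaleSubset (r : ℝ) T i) :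
    ({a, c} : Finset ℕ) ∈ T ∧ r ^ (i - 1) < c - a ∧ c - a ≤ r ^ i := by
  simp only [scaleSubset, Finset.mem_filter] at h
  refine ⟨h.1, ?_⟩
  have hgap : chordGap {a, c} = c - a := by
    have h1 : ({a, c} : Finset ℕ).sup id = c := by
      simp [Finset.sup_insert]; omega
    have h2 : ({a, c} : Finset ℕ).sum id = a + c := by
      rw [Finset.sum_pair hac.ne]; rfl
    rw [chordGap, h1, h2]; omega
  have h2 := h.2
  rw [chordScale, hgap, Int.ceil_eq_iff] at h2
  have hg : (0 : ℝ) < ((c - a : ℕ) : ℝ) := by exact_mod_cast (by omega : 0 < c - a)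
  have hr1 : (1 : ℝ) < r := by exact_mod_cast (by omega : 1 < r)
  have hl : 0 < Real.log r := Real.log_pos hr1
  have hr0 : (0 : ℝ) < r := by linarith
  rw [lt_div_iff₀ hl, div_le_iff₀ hl] at h2
  constructor
  · have : Real.log ((r : ℝ) ^ (i - 1)) < Real.log ((c - a : ℕ) : ℝ) := by
      rw [Real.log_pow, Nat.cast_sub hi]
      simpa using h2.1
    have := (Real.log_lt_log_iff (by positivity) hg).1 this
    exact_mod_cast this
  · have : Real.log ((c - a : ℕ) : ℝ) ≤ Real.log ((r : ℝ) ^ i) := by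
      rw [Real.log_pow]
      simpa using h2.2
    have := (Real.log_le_log_iff hg (by positivity)).1 this
    exact_mod_cast this

/-! ### Oriented dual steps -/

/-- The left end of the interval spanned by a face. -/
def lo : Face → ℕ
  | Sum.inl (a, _, _) => a
  | Sum.inr _ => 0

/-- The right end of the interval spanned by a face. The value on outer faces makes the interval of
`Sum.inr (n - 1)` equal to `[0, n]`, strictly larger than that of every triangle. -/
def hi : Face → ℕ
  | Sum.inl (_, _, c) => c
  | Sum.inr j => j + 1

/-- The length of the interval spanned by a face. -/
def len (f : Face) : ℕ := hi f - lo f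

/-- The properties of `S_i(T)`, `i ≥ 1`, on which the structure of oriented steps depends:
it consists of chords of `T`, none of length one. -/
def LongChords (T S : Finset (Finset ℕ)) : Prop :=
  ∀ a c, a < c → ({a, c} : Finset ℕ) ∈ S → ({a, c} : Finset ℕ) ∈ T ∧ a + 2 ≤ c

section Steps

variable {n : ℕ} {T S : Finset (Finset ℕ)}

lemma tail_cases (hS : LongChords T S) {e : Finset ℕ} (he : e ∈ S) {f : Face}
    (h : DualTail n T e f) :
    ∃ a b c, f = Sum.inl (a, b, c) ∧ IsTriangleOf T a b c ∧ e = {a, c} := by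
  rcases h with h | ⟨j, rfl, hj, rfl, hjT⟩
  · exact h
  · have := (hS j (j + 1) (by omega) he).2
    omega

lemma step_cases (hT : IsTriangulation n T) (hS : LongChords T S) {f f' : Face}
    (h : DualStep n T S f f') :
    ∃ a b c, f = Sum.inl (a, b, c) ∧ IsTriangleOf T a b c ∧ ({a, c} : Finset ℕ) ∈ S ∧
      ((∃ w, f' = Sum.inl (a, c, w) ∧ IsTriangleOf T a c w) ∨
       (∃ w, f' = Sum.inl (w, a, c) ∧ IsTriangleOf T w a c) ∨
       (f' = Sum.inr (n - 1) ∧ a = 0 ∧ c = n - 1)) := by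
  obtain ⟨e, he, ht, hh⟩ := h
  obtain ⟨a, b, c, rfl, htri, rfl⟩ := tail_cases hS he ht
  have hac : a < c := htri.1.trans htri.2.1
  refine ⟨a, b, c, rfl, htri, he, ?_⟩
  rcases hh with ⟨x, y, z, rfl, ht', h | h⟩ | ⟨rfl, h, -⟩
  · obtain ⟨rfl, rfl⟩ := pair_eq_pair hac ht'.1 h
    exact Or.inl ⟨z, rfl, ht'⟩
  · obtain ⟨rfl, rfl⟩ := pair_eq_pair hac ht'.2.1 h
    exact Or.inr (Or.inl ⟨x, rfl, ht'⟩)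
  · have hn := hT.lt htri.2.2.2.2
    obtain ⟨rfl, rfl⟩ := pair_eq_pair hac (by omega) h
    exact Or.inr (Or.inr ⟨rfl, rfl, rfl⟩)

lemma step_interval (hT : IsTriangulation n T) (hS : LongChords T S) {f f' : Face}
    (h : DualStep n T S f f') :
    lo f' ≤ lo f ∧ hi f ≤ hi f' ∧ len f < len f' := by
  obtain ⟨a, b, c, rfl, ht, -, ⟨w, rfl, ht'⟩ | ⟨w, rfl, ht'⟩ | ⟨rfl, rfl, rfl⟩⟩ :=
    step_cases hT hS h <;>
  · obtain ⟨h1, h2, h3⟩ := ht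
    try obtain ⟨h1', h2', h3'⟩ := ht'
    simp only [len, lo, hi]
    omega

lemma step_unique (hT : IsTriangulation n T) (hS : LongChords T S) {f g g' : Face}
    (h : DualStep n T S f g) (h' : DualStep n T S f g') : g = g' := by
  obtain ⟨a, b, c, rfl, ht, -, H⟩ := step_cases hT hS h
  obtain ⟨a', b', c', he, ht', -, H'⟩ := step_cases hT hS h'
  simp only [Sum.inl.injEq, Prod.mk.injEq] at he
  obtain ⟨rfl, rfl, rfl⟩ := he
  have e1 := ht.1
  have e2 := ht.2.1
  rcases H with ⟨w, rfl, h1, h2, h3, h4, h5⟩ | ⟨w, rfl, h1, h2, h3, h4, h5⟩ | ⟨rfl, ha, hc⟩ <;>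
  rcases H' with ⟨v, rfl, k1, k2, k3, k4, k5⟩ | ⟨v, rfl, k1, k2, k3, k4, k5⟩ | ⟨rfl, ka, kc⟩
  · rcases lt_trichotomy w v with hw | rfl | hw
    · exact (hT.not_cross h5 k4 h1 h2 hw).elim
    · rfl
    · exact (hT.not_cross k5 h4 h1 k2 hw).elim
  · exact (hT.not_cross k5 h5 k1 h1 h2).elim
  · have := hT.lt h5
    omega
  · exact (hT.not_cross h5 k5 h1 h2 k2).elim
  · rcases lt_trichotomy w v with hw | rfl | hw
    · exact (hT.not_cross h3 k5 hw k1 k2).elim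
    · rfl
    · exact (hT.not_cross k3 h5 hw h1 h2).elim
  · omega
  · have := hT.lt k5
    omega
  · omega
  · rfl

lemma exists_step_of_head (hT : IsTriangulation n T) (hST : S ⊆ T) (hS : LongChords T S)
    {e : Finset ℕ} (he : e ∈ S) {u : Face} (h : DualHead n T e u) :
    ∃ v, DualStep n T S v u ∧ DualTail n T e v := by
  obtain ⟨x, y, hxy, rfl⟩ := hT.eq_pair (hST he)
  obtain ⟨h1, h2⟩ := hS x y hxy he
  obtain ⟨m, hm⟩ := hT.exists_triangle h1 h2
  have ht : DualTail n T {x, y} (Sum.inl (x, m, y)) := Or.inl ⟨x, m, y, rfl, hm, rfl⟩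
  exact ⟨_, ⟨_, he, ht, h⟩, ht⟩

/-- A node of degree two has an incoming step, because at most one chord has it as tail. -/
lemma exists_step_of_degree (hT : IsTriangulation n T) (hST : S ⊆ T) (hS : LongChords T S)
    {u : Face} (h : hatDegree n T S u = 2) : ∃ v, DualStep n T S v u := by
  classical
  by_contra hno
  have : hatDegree n T S u ≤ 1 := by
    rw [hatDegree, Finset.card_le_one]
    intro e he e' he'
    simp only [Finset.mem_filter] at he he'
    have key : ∀ e, e ∈ S → (DualTail n T e u ∨ DualHead n T e u) → DualTail n T e u := by
      rintro e he (h | h)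
      · exact h
      · obtain ⟨v, hv, -⟩ := exists_step_of_head hT hST hS he h
        exact (hno ⟨v, hv⟩).elim
    obtain ⟨a, b, c, rfl, -, rfl⟩ := tail_cases hS he.1 (key _ he.1 he.2)
    obtain ⟨a', b', c', h1, -, rfl⟩ := tail_cases hS he'.1 (key _ he'.1 he'.2)
    simp only [Sum.inl.injEq, Prod.mk.injEq] at h1
    rw [h1.1, h1.2.2]
  omega

lemma step_adj (hT : IsTriangulation n T) (hS : LongChords T S) {u v : Face}
    (h : DualStep n T S u v) : (dualGraph n T S).Adj u v := by
  refine (SimpleGraph.fromRel_adj _ _ _).2 ⟨?_, Or.inl h⟩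
  rintro rfl
  exact absurd (step_interval hT hS h).2.2 (lt_irrefl _)

lemma reflTransGen_of_reachable (hT : IsTriangulation n T) (hS : LongChords T S) {ρ u : Face}
    (hroot : ¬ ∃ e ∈ S, DualTail n T e ρ) (h : (dualGraph n T S).Reachable u ρ) :
    Relation.ReflTransGen (DualStep n T S) u ρ := by
  obtain ⟨p⟩ := h
  induction p with
  | nil => exact .refl
  | cons hadj p ih =>
    have ih := ih hroot
    rcases ((SimpleGraph.fromRel_adj _ _ _).1 hadj).2 with h | h
    · exact .head h ih
    · -- A step backwards along the walk has to be the first step of the oriented path already found.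
      rcases ih.cases_head with rfl | ⟨x, hx, hxρ⟩
      · obtain ⟨e, he, ht, -⟩ := h
        exact (hroot ⟨e, he, ht⟩).elim
      · rwa [step_unique hT hS h hx]

lemma rtg_interval (hT : IsTriangulation n T) (hS : LongChords T S) {u v : Face}
    (h : Relation.ReflTransGen (DualStep n T S) u v) : lo v ≤ lo u ∧ hi u ≤ hi v := by
  induction h with
  | refl => exact ⟨le_rfl, le_rfl⟩
  | tail _ h ih =>
    have := step_interval hT hS h
    omega

/-! ### Neighbours in the reduced tree -/

/-- A reduced neighbour of `u`, described by its path in the component. -/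
def ReducedVia (n : ℕ) (T S : Finset (Finset ℕ)) (v₀ ρ u w : Face) (p : (dualGraph n T S).Walk u w) :
    Prop :=
  ReducedKept n T S v₀ ρ w ∧ p.IsPath ∧
    ∀ v ∈ p.support, v = u ∨ v = w ∨ (hatDegree n T S v = 2 ∧ v ≠ ρ)

lemma exists_down (hT : IsTriangulation n T) (hST : S ⊆ T) (hS : LongChords T S) {v₀ ρ : Face}
    (hroot : ¬ ∃ e ∈ S, DualTail n T e ρ) (N : ℕ) :
    ∀ u, len u ≤ N → (dualGraph n T S).Reachable v₀ u → (∃ v, DualStep n T S v u) →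
    ∃ w, ∃ p : (dualGraph n T S).Walk u w, ReducedVia n T S v₀ ρ u w p ∧ len w < len u ∧
      ∀ v ∈ p.support, len v ≤ len u := by
  induction N with
  | zero =>
    rintro u hu - ⟨v, hv⟩
    have := (step_interval hT hS hv).2.2
    omega
  | succ N ih =>
    rintro u hu hreach ⟨v, hv⟩
    have hlen := (step_interval hT hS hv).2.2
    have hadj := (step_adj hT hS hv).symm
    have hvreach := hreach.trans hadj.reachable
    have hvρ : v ≠ ρ := by
      rintro rfl
      obtain ⟨e, he, ht, -⟩ := hv
      exact hroot ⟨e, he, ht⟩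
    by_cases hdeg : hatDegree n T S v = 2
    · obtain ⟨w, p, ⟨hk, hp, hsup⟩, hw, hle⟩ := ih v (by omega) hvreach
        (exists_step_of_degree hT hST hS hdeg)
      refine ⟨w, .cons hadj p, ⟨hk, ?_, ?_⟩, by omega, ?_⟩
      · refine (SimpleGraph.Walk.cons_isPath_iff _ _).2 ⟨hp, fun hmem => ?_⟩
        have := hle u hmem
        omega
      · intro x hx
        rw [SimpleGraph.Walk.support_cons, List.mem_cons] at hx
        rcases hx with rfl | hx
        · exact Or.inl rfl
        · rcases hsup x hx with rfl | h
          · exact Or.inr (Or.inr ⟨hdeg, hvρ⟩)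
          · exact Or.inr h
      · intro x hx
        rw [SimpleGraph.Walk.support_cons, List.mem_cons] at hx
        rcases hx with rfl | hx
        · exact le_rfl
        · have := hle x hx
          omega
    · refine ⟨v, .cons hadj .nil, ⟨⟨hvreach, Or.inl hdeg⟩, ?_, ?_⟩, hlen, ?_⟩
      · simp [hadj.ne]
      · intro x hx
        simp at hx
        tauto
      · intro x hx
        simp at hx
        rcases hx with rfl | rfl <;> omega

lemma exists_up (hT : IsTriangulation n T) (hS : LongChords T S) {v₀ ρ : Face} {u : Face}
    (h : Relation.ReflTransGen (DualStep n T S) u ρ) :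
    u ≠ ρ → (dualGraph n T S).Reachable v₀ u →
    ∃ w, ∃ p : (dualGraph n T S).Walk u w, ReducedVia n T S v₀ ρ u w p ∧ len u < len w ∧
      ∀ v ∈ p.support, len u ≤ len v := by
  induction h using Relation.ReflTransGen.head_induction_on with
  | refl => exact fun h => (h rfl).elim
  | @head u v huv hvρ ih =>
    intro _ hreach
    have hlen := (step_interval hT hS huv).2.2
    have hadj := step_adj hT hS huv
    have hvreach := hreach.trans hadj.reachable
    by_cases hdeg : hatDegree n T S v = 2 ∧ v ≠ ρ
    · obtain ⟨w, p, ⟨hk, hp, hsup⟩, hw, hle⟩ := ih hdeg.2 hvreach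
      refine ⟨w, .cons hadj p, ⟨hk, ?_, ?_⟩, by omega, ?_⟩
      · refine (SimpleGraph.Walk.cons_isPath_iff _ _).2 ⟨hp, fun hmem => ?_⟩
        have := hle u hmem
        omega
      · intro x hx
        rw [SimpleGraph.Walk.support_cons, List.mem_cons] at hx
        rcases hx with rfl | hx
        · exact Or.inl rfl
        · rcases hsup x hx with rfl | h
          · exact Or.inr (Or.inr hdeg)
          · exact Or.inr h
      · intro x hx
        rw [SimpleGraph.Walk.support_cons, List.mem_cons] at hx
        rcases hx with rfl | hx
        · exact le_rfl
        · have := hle x hx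
          omega
    · refine ⟨v, .cons hadj .nil, ⟨⟨hvreach, by tauto⟩, ?_, ?_⟩, hlen, ?_⟩
      · simp [hadj.ne]
      · intro x hx
        simp at hx
        tauto
      · intro x hx
        simp at hx
        rcases hx with rfl | rfl <;> omega

lemma ReducedVia.adj {v₀ ρ u w : Face} {p : (dualGraph n T S).Walk u w}
    (h : ReducedVia n T S v₀ ρ u w p) (hu : ReducedKept n T S v₀ ρ u) (hne : u ≠ w) :
    ReducedAdj n T S v₀ ρ (Sum.inl u) (Sum.inl w) :=
  Or.inl ⟨u, w, rfl, rfl, hne, hu, h.1, p, h.2⟩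

/-! ### Sources -/

/-- A source of the component with root `ρ`: a node other than `ρ` that flows to `ρ` and has no
incoming step. -/
def IsSource (n : ℕ) (T S : Finset (Finset ℕ)) (ρ u : Face) : Prop :=
  Relation.ReflTransGen (DualStep n T S) u ρ ∧ u ≠ ρ ∧ ¬ ∃ v, DualStep n T S v u

/-- Sources are triangles whose long side is in `S`. -/
lemma IsSource.cases (hT : IsTriangulation n T) (hS : LongChords T S) {ρ u : Face}
    (h : IsSource n T S ρ u) :
    ∃ a b c, u = Sum.inl (a, b, c) ∧ IsTriangleOf T a b c ∧ ({a, c} : Finset ℕ) ∈ S := by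
  rcases h.1.cases_head with h' | ⟨x, hx, -⟩
  · exact (h.2.1 h').elim
  · obtain ⟨a, b, c, h1, h2, h3, -⟩ := step_cases hT hS hx
    exact ⟨a, b, c, h1, h2, h3⟩

/-- An oriented path that starts inside the interval of the node `u` either passes through `u` or
stays inside that interval, since it cannot cross the long side of `u`. -/
lemma path_through (hT : IsTriangulation n T) (hS : LongChords T S) {a b c : ℕ}
    (htri : IsTriangleOf T a b c) {v z : Face} (hv : a ≤ lo v ∧ hi v ≤ c)
    (h : Relation.ReflTransGen (DualStep n T S) v z) :
    Relation.ReflTransGen (DualStep n T S) v (Sum.inl (a, b, c)) ∨ (a ≤ lo z ∧ hi z ≤ c) := by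
  induction h with
  | refl => exact Or.inr hv
  | @tail y z hvy hyz ih =>
    rcases ih with ih | ⟨h1, h2⟩
    · exact Or.inl ih
    obtain ⟨x, m, t, rfl, ht, hxt, H⟩ := step_cases hT hS hyz
    simp only [lo, hi] at h1 h2
    by_cases heq : x = a ∧ t = c
    · obtain ⟨rfl, rfl⟩ := heq
      rw [triangle_unique hT htri ht]
      exact Or.inl hvy
    right
    obtain ⟨g1, g2, -, -, g5⟩ := htri
    obtain ⟨f1, f2, -, -, f5⟩ := ht
    rcases H with ⟨w, rfl, k1, k2, k3, k4, k5⟩ | ⟨w, rfl, k1, k2, k3, k4, k5⟩ | ⟨rfl, rfl, rfl⟩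
    · refine ⟨h1, ?_⟩
      simp only [hi]
      by_contra hw
      by_cases hxa : x = a
      · exact hT.not_cross g5 k4 (by omega) (by omega) (by omega)
      · exact hT.not_cross g5 k5 (by omega) (by omega) (by omega)
    · refine ⟨?_, h2⟩
      simp only [lo]
      by_contra hw
      by_cases htc : t = c
      · exact hT.not_cross k3 g5 (by omega) (by omega) (by omega)
      · exact hT.not_cross k5 g5 (by omega) (by omega) (by omega)
    · have := hT.lt g5
      omega

lemma source_not_nested (hT : IsTriangulation n T) (hS : LongChords T S) {ρ u v : Face}
    (hu : IsSource n T S ρ u) (hv : IsSource n T S ρ v) (hne : u ≠ v)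
    (h : lo u ≤ lo v ∧ hi v ≤ hi u) : False := by
  obtain ⟨a, b, c, rfl, htri, -⟩ := hu.cases hT hS
  rcases path_through hT hS htri h hv.1 with h' | h'
  · rcases h'.cases_tail with h' | ⟨x, -, hx⟩
    · exact hne h'
    · exact hu.2.2 ⟨x, hx⟩
  · rcases hu.1.cases_head with h1 | ⟨x, hx, hxρ⟩
    · exact hu.2.1 h1
    · have e1 := step_interval hT hS hx
      have e2 := rtg_interval hT hS hxρ
      simp only [len, lo, hi] at e1 e2 h'
      omega

lemma source_disjoint (hT : IsTriangulation n T) (hS : LongChords T S) {ρ u v : Face}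
    (hu : IsSource n T S ρ u) (hv : IsSource n T S ρ v) (hne : u ≠ v) :
    Disjoint (Finset.Ico (lo u) (hi u)) (Finset.Ico (lo v) (hi v)) := by
  have n1 := source_not_nested hT hS hu hv hne
  have n2 := source_not_nested hT hS hv hu hne.symm
  obtain ⟨a, b, c, rfl, ⟨h1, h2, -, -, h3⟩, -⟩ := hu.cases hT hS
  obtain ⟨a', b', c', rfl, ⟨k1, k2, -, -, k3⟩, -⟩ := hv.cases hT hS
  have x1 := hT.not_cross h3 k3
  have x2 := hT.not_cross k3 h3
  simp only [lo, hi] at *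
  rw [Finset.disjoint_left]
  intro z hz hz'
  rw [Finset.mem_Ico] at hz hz'
  by_cases q1 : a ≤ a' ∧ c' ≤ c
  · exact n1 q1
  by_cases q2 : a' ≤ a ∧ c ≤ c'
  · exact n2 q2
  by_cases q3 : a < a'
  · exact x1 q3 (by omega) (by omega)
  · exact x2 (by omega) (by omega) (by omega)

end Steps

/-- At most `r - 1` disjoint intervals longer than `r ^ (i - 1)` fit into one of length at most
`r ^ i`. -/
lemma card_le_of_disjoint {r i : ℕ} (hi1 : 1 ≤ i) {x y : ℕ} (hxy : y - x ≤ r ^ i)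
    (hr : 1 ≤ r) (L : Finset Face)
    (hsub : ∀ u ∈ L, x ≤ lo u ∧ hi u ≤ y) (hlong : ∀ u ∈ L, r ^ (i - 1) < hi u - lo u)
    (hdis : ∀ u ∈ L, ∀ v ∈ L, u ≠ v →
      Disjoint (Finset.Ico (lo u) (hi u)) (Finset.Ico (lo v) (hi v))) :
    L.card ≤ r - 1 := by
  classical
  have h1 : (L.biUnion fun u => Finset.Ico (lo u) (hi u)).card ≤ (Finset.Ico x y).card := by
    refine Finset.card_le_card (Finset.biUnion_subset.2 fun u hu => ?_)
    exact Finset.Ico_subset_Ico (hsub u hu).1 (hsub u hu).2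
  rw [Finset.card_biUnion hdis, Nat.card_Ico] at h1
  have h2 : L.card * (r ^ (i - 1) + 1) ≤ ∑ u ∈ L, (Finset.Ico (lo u) (hi u)).card := by
    rw [← smul_eq_mul]
    refine Finset.card_nsmul_le_sum _ _ _ fun u hu => ?_
    rw [Nat.card_Ico]
    exact hlong u hu
  have h3 : r ^ i = r * r ^ (i - 1) := by
    rw [← pow_succ']
    congr 1
    omega
  by_contra hcon
  have h4 : r ≤ L.card := by omega
  have h5 := Nat.mul_le_mul_right (r ^ (i - 1) + 1) h4
  have h6 : r * (r ^ (i - 1) + 1) = r * r ^ (i - 1) + r := by ring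
  omega

/-! ### Counting the leaves -/

/-- Proposition 5: for an integer `r ≥ 3`, `1 ≤ i ≤ ⌈log_r n⌉`, and a connected
component `Ĥ` of `Ŝ_i(T)` containing at least one edge (here specified by a node `v₀`
incident to an edge of `Ŝᵢ(T)`, with root `ρ`), the reduced tree `H̃` of `Ĥ` has at most
`2r - 1` leaves. -/
theorem reducedTree_leaves_le
    (r : ℕ) (hr : 3 ≤ r) (n : ℕ) (hn : 4 ≤ n)
    (T : Finset (Finset ℕ)) (hT : IsTriangulation n T)
    (i : ℕ) (hi1 : 1 ≤ i) (hi2 : i ≤ ⌈Real.log (n : ℝ) / Real.log (r : ℝ)⌉₊)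
    (v₀ ρ : Face)
    (hedge : ∃ e ∈ scaleSubset (r : ℝ) T i, DualTail n T e v₀ ∨ DualHead n T e v₀)
    (hρmem : (dualGraph n T (scaleSubset (r : ℝ) T i)).Reachable v₀ ρ)
    (hρroot : ¬ ∃ e ∈ scaleSubset (r : ℝ) T i, DualTail n T e ρ) :
    {x : Face ⊕ Unit | IsReducedLeaf n T (scaleSubset (r : ℝ) T i) v₀ ρ x}.Finite ∧
    {x : Face ⊕ Unit | IsReducedLeaf n T (scaleSubset (r : ℝ) T i) v₀ ρ x}.ncard ≤
      2 * r - 1 := by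
  classical
  set S := scaleSubset (r : ℝ) T i with hSdef
  have hST : S ⊆ T := Finset.filter_subset _ _
  have hS : LongChords T S := by
    intro a c hac h
    obtain ⟨h1, h2, -⟩ := gap_of_mem_scaleSubset hr hi1 hac h
    have : 0 < r ^ (i - 1) := by positivity
    exact ⟨h1, by omega⟩
  let L : Finset Face := (allFaces n).filter (IsSource n T S ρ)
  let E : Finset (Finset ℕ) := S.filter fun e => DualHead n T e ρ
  have hdegE : hatDegree n T S ρ = E.card := by
    rw [hatDegree]
    congr 1
    ext e
    simp only [E, Finset.mem_filter, and_congr_right_iff]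
    exact fun he => ⟨fun h => h.resolve_left fun h => hρroot ⟨e, he, h⟩, Or.inr⟩
  have hE2 : E.card ≤ 2 := by
    rcases ρ with ⟨a, b, c⟩ | j
    · refine (Finset.card_le_card (t := {{a, b}, {b, c}}) ?_).trans Finset.card_le_two
      intro e he
      rcases (Finset.mem_filter.1 he).2 with ⟨x, y, z, h, -, h'⟩ | ⟨h, -⟩
      · simp only [Sum.inl.injEq, Prod.mk.injEq] at h
        obtain ⟨rfl, rfl, rfl⟩ := h
        simpa using h'
      · cases h
    · refine (Finset.card_le_card (t := {{0, n - 1}}) ?_).trans (by simp)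
      intro e he
      rcases (Finset.mem_filter.1 he).2 with ⟨x, y, z, h, -⟩ | ⟨-, h, -⟩
      · cases h
      · simpa using h
  have hLE : L.card ≤ E.card * (r - 1) := by
    -- Sort the sources by the chord through which their path enters the root.
    let F : Finset ℕ → Finset Face := fun e =>
      L.filter fun u => ∃ x y, x < y ∧ e = {x, y} ∧ x ≤ lo u ∧ hi u ≤ y
    have hcover : L ⊆ E.biUnion F := by
      intro u hu
      have hsrc : IsSource n T S ρ u := (Finset.mem_filter.1 hu).2
      rcases hsrc.1.cases_tail with h | ⟨v, huv, e, he, ht, hh⟩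
      · exact (hsrc.2.1 h.symm).elim
      · obtain ⟨a, b, c, rfl, htri, rfl⟩ := tail_cases hS he ht
        exact Finset.mem_biUnion.2 ⟨_, Finset.mem_filter.2 ⟨he, hh⟩, Finset.mem_filter.2
          ⟨hu, a, c, htri.1.trans htri.2.1, rfl, rtg_interval hT hS huv⟩⟩
    refine (Finset.card_le_card hcover).trans (Finset.card_biUnion_le_card_mul _ _ _ ?_)
    intro e he
    have heS := (Finset.mem_filter.1 he).1
    obtain ⟨x, y, hxy, rfl⟩ := hT.eq_pair (hST heS)
    refine card_le_of_disjoint hi1 (gap_of_mem_scaleSubset hr hi1 hxy heS).2.2 (by omega) _ ?_ ?_ ?_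
    · intro u hu
      obtain ⟨x', y', hxy', heq, h⟩ := (Finset.mem_filter.1 hu).2
      obtain ⟨rfl, rfl⟩ := pair_eq_pair hxy hxy' heq
      exact h
    · intro u hu
      have hsrc : IsSource n T S ρ u := (Finset.mem_filter.1 (Finset.mem_filter.1 hu).1).2
      obtain ⟨a, b, c, rfl, htri, hmem⟩ := hsrc.cases hT hS
      exact (gap_of_mem_scaleSubset hr hi1 (htri.1.trans htri.2.1) hmem).2.1
    · intro u hu v hv
      exact source_disjoint hT hS (Finset.mem_filter.1 (Finset.mem_filter.1 hu).1).2
        (Finset.mem_filter.1 (Finset.mem_filter.1 hv).1).2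
  have hdown : ∀ u, ReducedKept n T S v₀ ρ u → (∃ v, DualStep n T S v u) →
      ∃ w, len w < len u ∧ ReducedAdj n T S v₀ ρ (Sum.inl u) (Sum.inl w) := by
    intro u hk hin
    obtain ⟨w, p, hp, hlt, -⟩ := exists_down hT hST hS hρroot _ u le_rfl hk.1 hin
    refine ⟨w, hlt, hp.adj hk ?_⟩
    rintro rfl
    omega
  -- A reduced leaf is a source, the added node, or a root of degree other than two.
  have hleaf : ∀ x, IsReducedLeaf n T S v₀ ρ x →
      x ∈ insert (if E.card = 2 then Sum.inr () else Sum.inl ρ) (L.image Sum.inl) := by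
    rintro (u | ⟨⟩) ⟨y, hy, huniq⟩
    · have hk : ReducedKept n T S v₀ ρ u := by
        rcases hy with ⟨u', w, h, -, -, hk, -⟩ | ⟨-, ⟨h, -⟩ | ⟨-, _, h⟩⟩
        · cases h
          exact hk
        · cases h
          exact ⟨hρmem, Or.inr rfl⟩
        · cases h
      by_cases huρ : u = ρ
      · subst huρ
        by_cases hd : E.card = 2
        · obtain ⟨w, -, hw⟩ := hdown u hk
            (exists_step_of_degree hT hST hS (hdegE.trans hd))
          have h1 := huniq _ hw
          have h2 := huniq (Sum.inr ()) (Or.inr ⟨hdegE.trans hd, Or.inl ⟨rfl, (), rfl⟩⟩)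
          rw [← h1] at h2
          cases h2
        · simp [hd]
      · have hflow := reflTransGen_of_reachable hT hS hρroot (hk.1.symm.trans hρmem)
        refine Finset.mem_insert_of_mem (Finset.mem_image_of_mem _ ?_)
        have hsrc : IsSource n T S ρ u := by
          refine ⟨hflow, huρ, fun hin => ?_⟩
          obtain ⟨w, hw, hadj⟩ := hdown u hk hin
          obtain ⟨w', p, hp, hlt, -⟩ := exists_up hT hS hflow huρ hk.1
          have h1 := huniq _ hadj
          have h2 := huniq _ (hp.adj hk (by rintro rfl; omega))
          rw [← h2] at h1
          cases h1
          omega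
        refine Finset.mem_filter.2 ⟨?_, hsrc⟩
        obtain ⟨a, b, c, rfl, htri, -⟩ := hsrc.cases hT hS
        have hc := hT.lt htri.2.2.2.2
        have hab := htri.1
        have hbc := htri.2.1
        refine Finset.mem_union_left _ (Finset.mem_image_of_mem _ ?_)
        simp only [Finset.mem_product, Finset.mem_range]
        omega
    · have hd : hatDegree n T S ρ = 2 := by
        rcases hy with ⟨u', w, h, -⟩ | ⟨h, -⟩
        · cases h
        · exact h
      rw [if_pos (hdegE.symm.trans hd)]
      exact Finset.mem_insert_self _ _
  refine ⟨(Finset.finite_toSet _).subset hleaf, ?_⟩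
  refine (Set.ncard_le_ncard hleaf (Finset.finite_toSet _)).trans ?_
  rw [Set.ncard_coe_finset]
  refine (Finset.card_insert_le _ _).trans ?_
  have h1 : (L.image (Sum.inl : Face → Face ⊕ Unit)).card ≤ L.card := Finset.card_image_le
  have h2 := Nat.mul_le_mul_right (r - 1) hE2
  omega
end

section
/- For every integer n ≥ 3, the associahedron A_n is (n−3)-regular: every triangulation of the n-gon has exactly n−3 neighbours in A_n. -/
/-- The associahedron `𝒜ₙ`: vertices are the triangulations of the `n`-gon, with two
triangulations adjacent iff `|T \ T'| = |T' \ T| = 1` (i.e. they differ by one flip). -/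
def Associahedron (n : ℕ) : SimpleGraph {T : Finset (Finset ℕ) // IsTriangulation n T} :=
  SimpleGraph.fromRel (fun T T' => (T.1 \ T'.1).card = 1 ∧ (T'.1 \ T.1).card = 1)

/-! ### Triangulations as relations on ordered pairs -/

/-- A triangulation of the `n`-gon encoded as the relation `P x y`, meaning that `x < y` and that
`{x, y}` is one of its chords (boundary edges included). -/
structure IsTri (n : ℕ) (P : ℕ → ℕ → Prop) : Prop where
  lt : ∀ {x y}, P x y → x < y
  bd : ∀ {x y}, P x y → y < n
  side : ∀ {i}, i + 1 < n → P i (i + 1)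
  base : P 0 (n - 1)
  nc : ∀ {x y u v}, P x y → P u v → ¬ (x < u ∧ u < y ∧ y < v)
  max : ∀ {x y}, x < y → y < n → ¬ P x y →
    ∃ u v, P u v ∧ ((x < u ∧ u < y ∧ y < v) ∨ (u < x ∧ x < v ∧ v < y))

/-- Every chord with room below it is the longest side of a triangle. -/
lemma IsTri.exists_inner {n : ℕ} {P : ℕ → ℕ → Prop} (h : IsTri n P) {a b : ℕ} (hab : P a b)
    (h2 : a + 2 ≤ b) : ∃ c, a < c ∧ c < b ∧ P a c ∧ P c b := by
  classical
  have hb := h.bd hab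
  obtain ⟨c, hc, hmax⟩ := ((Finset.Ioo a b).filter (P a)).exists_max_image id
    ⟨a + 1, by simp only [Finset.mem_filter, Finset.mem_Ioo]
               exact ⟨by omega, h.side (by omega)⟩⟩
  simp only [Finset.mem_filter, Finset.mem_Ioo, id] at hc hmax
  refine ⟨c, hc.1.1, hc.1.2, hc.2, ?_⟩
  by_contra hcb
  obtain ⟨u, v, huv, hx⟩ := h.max hc.1.2 hb hcb
  have h1 := h.nc huv hab
  have h3 := h.nc hab huv
  have h4 := h.nc hc.2 huv
  by_cases hu : u = a
  · subst hu
    have := hmax v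
    rcases hx with hx | hx
    · omega
    · have := this ⟨by omega, huv⟩
      omega
  · omega

/-- Every chord other than the base `(0, n - 1)` is a shorter side of a triangle. -/
lemma IsTri.exists_outer {n : ℕ} {P : ℕ → ℕ → Prop} (h : IsTri n P) {a b : ℕ} (hab : P a b)
    (h0 : ¬ (a = 0 ∧ b = n - 1)) :
    (∃ d, d < a ∧ P d a ∧ P d b) ∨ (∃ d, b < d ∧ P a d ∧ P b d) := by
  classical
  have hlt := h.lt hab
  have hb := h.bd hab
  have hex : ∃ k x y, P x y ∧ x ≤ a ∧ b ≤ y ∧ ¬ (x = a ∧ y = b) ∧ k = y - x :=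
    ⟨_, 0, n - 1, h.base, by omega, by omega, by omega, rfl⟩
  obtain ⟨x, y, hxy, hxa, hby, hne, hk⟩ := Nat.find_spec hex
  have hmin : ∀ u v, P u v → u ≤ a → b ≤ v → ¬ (u = a ∧ v = b) → y - x ≤ v - u := by
    intro u v huv h1 h2 h3
    rw [← hk]
    exact Nat.find_min' hex ⟨u, v, huv, h1, h2, h3, rfl⟩
  obtain ⟨c, hxc, hcy, pxc, pcy⟩ := h.exists_inner hxy (by omega)
  rcases Nat.lt_or_ge a c with hac | hca
  · rcases Nat.lt_or_ge c b with hcb | hbc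
    -- an apex strictly between `a` and `b` would make `(x, c)` or `(c, y)` cross `(a, b)`
    · have h1 := h.nc pxc hab
      have h2 := h.nc hab pcy
      omega
    · right
      have := hmin x c pxc hxa hbc
      have hx : x = a ∧ c = b := by
        by_contra hcon
        have := this hcon
        omega
      obtain ⟨rfl, rfl⟩ := hx
      exact ⟨y, hcy, hxy, pcy⟩
  · left
    have := hmin c y pcy hca hby
    have hx : c = a ∧ y = b := by
      by_contra hcon
      have := this hcon
      omega
    obtain ⟨rfl, rfl⟩ := hx
    exact ⟨x, hxc, pxc, hxy⟩

/-- The two triangles at a diagonal form a quadrilateral of which it is one of the diagonals. -/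
lemma IsTri.exists_quad {n : ℕ} {P : ℕ → ℕ → Prop} (h : IsTri n P) {a b : ℕ} (hab : P a b)
    (h2 : a + 2 ≤ b) (h0 : ¬ (a = 0 ∧ b = n - 1)) :
    ∃ p q r s, p < q ∧ q < r ∧ r < s ∧ P p q ∧ P q r ∧ P r s ∧ P p s ∧
      ((a = p ∧ b = r) ∨ (a = q ∧ b = s)) := by
  obtain ⟨c, hac, hcb, pac, pcb⟩ := h.exists_inner hab h2
  rcases h.exists_outer hab h0 with ⟨d, hd, h1, h3⟩ | ⟨d, hd, h1, h3⟩
  · exact ⟨d, a, c, b, hd, hac, hcb, h1, pac, pcb, h3, Or.inr ⟨rfl, rfl⟩⟩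
  · exact ⟨a, c, b, d, hac, hcb, hd, pac, pcb, h3, h1, Or.inl ⟨rfl, rfl⟩⟩

/-! ### Counting diagonals -/

open Classical in
/-- The chords `(x, y)` of `P` with `a ≤ x`, `x + 2 ≤ y` and `y ≤ b`. -/
noncomputable def below (P : ℕ → ℕ → Prop) (a b : ℕ) : Finset (ℕ × ℕ) :=
  (Finset.range (b + 1) ×ˢ Finset.range (b + 1)).filter
    fun z => a ≤ z.1 ∧ z.1 + 2 ≤ z.2 ∧ z.2 ≤ b ∧ P z.1 z.2

lemma mem_below {P : ℕ → ℕ → Prop} {a b x y : ℕ} :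
    (x, y) ∈ below P a b ↔ a ≤ x ∧ x + 2 ≤ y ∧ y ≤ b ∧ P x y := by
  simp only [below, Finset.mem_filter, Finset.mem_product, Finset.mem_range]
  constructor
  · exact fun h => h.2
  · exact fun h => ⟨⟨by omega, by omega⟩, h⟩

lemma IsTri.card_below {n : ℕ} {P : ℕ → ℕ → Prop} (h : IsTri n P) :
    ∀ (k a b : ℕ), b - a = k → P a b → (below P a b).card = b - a - 1 := by
  intro k
  induction k using Nat.strong_induction_on with
  | _ k ih =>
    intro a b hk hab
    have hlt := h.lt hab
    by_cases h2 : a + 2 ≤ b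
    · obtain ⟨c, hac, hcb, pac, pcb⟩ := h.exists_inner hab h2
      have e1 := ih (c - a) (by omega) a c rfl pac
      have e2 := ih (b - c) (by omega) c b rfl pcb
      have hdisj : Disjoint (below P a c) (below P c b) := by
        rw [Finset.disjoint_left]
        rintro ⟨x, y⟩ h1 h2
        rw [mem_below] at h1 h2
        omega
      have hnot : (a, b) ∉ below P a c ∪ below P c b := by
        rw [Finset.mem_union, mem_below, mem_below]
        omega
      have heq : below P a b = insert (a, b) (below P a c ∪ below P c b) := by
        ext ⟨x, y⟩
        rw [Finset.mem_insert, Finset.mem_union, mem_below, mem_below, mem_below, Prod.mk.injEq]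
        constructor
        · rintro ⟨h1, h2, h3, h4⟩
          have n1 := h.nc pac h4
          have n2 := h.nc h4 pcb
          by_cases y ≤ c
          · exact Or.inr (Or.inl ⟨by omega, by omega, by omega, h4⟩)
          · by_cases c ≤ x
            · exact Or.inr (Or.inr ⟨by omega, by omega, by omega, h4⟩)
            · exact Or.inl (by omega)
        · rintro (⟨rfl, rfl⟩ | ⟨h1, h2, h3, h4⟩ | ⟨h1, h2, h3, h4⟩)
          · exact ⟨le_rfl, h2, le_rfl, hab⟩
          · exact ⟨by omega, by omega, by omega, h4⟩
          · exact ⟨by omega, by omega, by omega, h4⟩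
      rw [heq, Finset.card_insert_of_notMem hnot, Finset.card_union_of_disjoint hdisj, e1, e2]
      omega
    · have : below P a b = ∅ := by
        rw [Finset.eq_empty_iff_forall_notMem]
        rintro ⟨x, y⟩ hm
        rw [mem_below] at hm
        omega
      rw [this, Finset.card_empty]
      omega

/-! ### Unordered chords -/

lemma pair_inj {a b c d : ℕ} (hab : a < b) (hcd : c < d) :
    ({a, b} : Finset ℕ) = {c, d} ↔ a = c ∧ b = d := by
  constructor
  · intro h
    have h1 : a ∈ ({c, d} : Finset ℕ) := h ▸ by simp
    have h2 : b ∈ ({c, d} : Finset ℕ) := h ▸ by simp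
    have h3 : c ∈ ({a, b} : Finset ℕ) := h ▸ by simp
    simp only [Finset.mem_insert, Finset.mem_singleton] at h1 h2 h3
    omega
  · rintro ⟨rfl, rfl⟩
    rfl

lemma crosses_pair {a b c d : ℕ} (hab : a < b) (hcd : c < d) :
    Crosses {a, b} {c, d} ↔ (a < c ∧ c < b ∧ b < d) ∨ (c < a ∧ a < d ∧ d < b) := by
  constructor
  · rintro ⟨a', b', c', d', h1, h2, h3, h4, h5⟩
    rw [pair_inj hab h1] at h3
    rw [pair_inj hcd h2] at h4
    omega
  · exact fun h => ⟨a, b, c, d, hab, hcd, rfl, rfl, h⟩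

lemma Crosses.symm {e f : Finset ℕ} (h : Crosses e f) : Crosses f e := by
  obtain ⟨a, b, c, d, h1, h2, rfl, rfl, h5⟩ := h
  rw [crosses_pair h2 h1]
  omega

lemma IsChord.exists_pair {n : ℕ} {e : Finset ℕ} (h : IsChord n e) :
    ∃ x y, x < y ∧ y < n ∧ e = {x, y} := by
  obtain ⟨h1, h2⟩ := h
  obtain ⟨x, y, hne, rfl⟩ := Finset.card_eq_two.mp h1
  have hx := h2 x (by simp)
  have hy := h2 y (by simp)
  rcases Nat.lt_or_gt_of_ne hne with h | h
  · exact ⟨x, y, h, hy, rfl⟩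
  · exact ⟨y, x, h, hx, Finset.pair_comm _ _⟩

lemma isChord_pair {n x y : ℕ} (hxy : x < y) (hy : y < n) : IsChord n {x, y} := by
  refine ⟨Finset.card_pair hxy.ne, fun z hz => ?_⟩
  simp only [Finset.mem_insert, Finset.mem_singleton] at hz
  omega

lemma isBoundaryEdge_pair {n x y : ℕ} (hxy : x < y) (hy : y < n) :
    IsBoundaryEdge n {x, y} ↔ y = x + 1 ∨ (x = 0 ∧ y = n - 1) := by
  constructor
  · rintro ⟨i, hi, he⟩
    by_cases h : i + 1 < n
    · rw [Nat.mod_eq_of_lt h, pair_inj hxy (by omega)] at he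
      omega
    · have h' : i + 1 = n := by omega
      rw [h', Nat.mod_self, Finset.pair_comm i 0, pair_inj hxy (by omega)] at he
      omega
  · rintro (rfl | ⟨rfl, rfl⟩)
    · exact ⟨x, by omega, by rw [Nat.mod_eq_of_lt hy]⟩
    · refine ⟨n - 1, hy, ?_⟩
      rw [Nat.sub_add_cancel (by omega), Nat.mod_self, Finset.pair_comm]

lemma IsTriangulation.mem_of_isBoundaryEdge {n : ℕ} {T : Finset (Finset ℕ)}
    (hT : IsTriangulation n T) {e : Finset ℕ} (he : IsBoundaryEdge n e) : e ∈ T := by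
  obtain ⟨i, hi, rfl⟩ := he
  exact hT.2.1 i hi

/-- The relation on ordered pairs attached to a set of chords. -/
def Seg (T : Finset (Finset ℕ)) (x y : ℕ) : Prop := x < y ∧ {x, y} ∈ T

lemma IsTriangulation.isTri {n : ℕ} (hn : 3 ≤ n) {T : Finset (Finset ℕ)}
    (hT : IsTriangulation n T) : IsTri n (Seg T) where
  lt h := h.1
  bd {x y} h := (hT.1 _ h.2).2 y (by simp)
  side {i} h := ⟨by omega, hT.mem_of_isBoundaryEdge
    ((isBoundaryEdge_pair (by omega) h).2 (Or.inl rfl))⟩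
  base := ⟨by omega, hT.mem_of_isBoundaryEdge
    ((isBoundaryEdge_pair (by omega) (by omega)).2 (Or.inr ⟨rfl, rfl⟩))⟩
  nc h1 h2 h3 := hT.2.2.1 _ h1.2 _ h2.2 ((crosses_pair h1.1 h2.1).2 (Or.inl h3))
  max {x y} hxy hy hP := by
    have hm : {x, y} ∉ T := fun h => hP ⟨hxy, h⟩
    obtain ⟨f, hf, hc⟩ := hT.2.2.2 _
      ⟨isChord_pair hxy hy, fun hb => hm (hT.mem_of_isBoundaryEdge hb)⟩ hm
    obtain ⟨u, v, huv, -, rfl⟩ := (hT.1 f hf).exists_pair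
    exact ⟨u, v, ⟨huv, hf⟩, (crosses_pair hxy huv).1 hc⟩

/-! ### Flips -/

/-- Each diagonal `e` of a triangulation comes with a chord `e'` crossing it such that, among all
chords, exactly `e'` is missing from `T` and compatible with `T \ {e}`. -/
lemma exists_dual {n : ℕ} (hn : 3 ≤ n) {T : Finset (Finset ℕ)} (hT : IsTriangulation n T)
    {e : Finset ℕ} (heT : e ∈ T) (he : ¬ IsBoundaryEdge n e) :
    ∃ e', IsChord n e' ∧ Crosses e e' ∧ (∀ f ∈ T, f ≠ e → ¬ Crosses e' f) ∧
      ∀ f, IsChord n f → f ∉ T → (∀ g ∈ T, g ≠ e → ¬ Crosses f g) → f = e' := by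
  have h := hT.isTri hn
  obtain ⟨a, b, hab, hb, rfl⟩ := (hT.1 e heT).exists_pair
  rw [isBoundaryEdge_pair hab hb] at he
  obtain ⟨p, q, r, s, hpq, hqr, hrs, Ppq, Pqr, Prs, Pps, hor⟩ :=
    h.exists_quad (a := a) (b := b) ⟨hab, heT⟩ (by omega) (by omega)
  have hs := h.bd Pps
  -- a chord missing from `T` and compatible with `T \ {e}` must cross `e` and no side
  have key : ∀ f, IsChord n f → f ∉ T → (∀ g ∈ T, g ≠ {a, b} → ¬ Crosses f g) →
      ∃ x y, x < y ∧ f = {x, y} ∧ Crosses {x, y} {a, b} ∧ ¬ Crosses {x, y} {p, q} ∧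
        ¬ Crosses {x, y} {q, r} ∧ ¬ Crosses {x, y} {r, s} ∧ ¬ Crosses {x, y} {p, s} := by
    intro f hf hfT hfc
    obtain ⟨x, y, hxy, hy, rfl⟩ := hf.exists_pair
    obtain ⟨g, hg, hc⟩ := hT.2.2.2 _ ⟨hf, fun hb => hfT (hT.mem_of_isBoundaryEdge hb)⟩ hfT
    have hge : g = {a, b} := by
      by_contra hne
      exact hfc g hg hne hc
    subst hge
    refine ⟨x, y, hxy, rfl, hc, hfc _ Ppq.2 ?_, hfc _ Pqr.2 ?_, hfc _ Prs.2 ?_, hfc _ Pps.2 ?_⟩ <;>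
    · rw [Ne, pair_inj (by omega) hab]
      omega
  rcases hor with ⟨rfl, rfl⟩ | ⟨rfl, rfl⟩
  · refine ⟨{q, s}, isChord_pair (by omega) hs, ?_, ?_, ?_⟩
    · rw [crosses_pair hab (by omega)]
      omega
    · intro f hf hne hc
      obtain ⟨x, y, hxy, hy, rfl⟩ := (hT.1 f hf).exists_pair
      rw [Ne, pair_inj hxy hab] at hne
      rw [crosses_pair (by omega) hxy] at hc
      have Pxy : Seg T x y := ⟨hxy, hf⟩
      have := h.nc Pxy Ppq
      have := h.nc Ppq Pxy
      have := h.nc Pxy Pqr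
      have := h.nc Pqr Pxy
      have := h.nc Pxy Prs
      have := h.nc Prs Pxy
      have := h.nc Pxy Pps
      have := h.nc Pps Pxy
      omega
    · intro f hf hfT hfc
      obtain ⟨x, y, hxy, rfl, h1, h2, h3, h4, h5⟩ := key f hf hfT hfc
      rw [crosses_pair hxy (by omega)] at h1 h2 h3 h4 h5
      rw [pair_inj hxy (by omega)]
      omega
  · refine ⟨{p, r}, isChord_pair (by omega) (by omega), ?_, ?_, ?_⟩
    · rw [crosses_pair hab (by omega)]
      omega
    · intro f hf hne hc
      obtain ⟨x, y, hxy, hy, rfl⟩ := (hT.1 f hf).exists_pair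
      rw [Ne, pair_inj hxy hab] at hne
      rw [crosses_pair (by omega) hxy] at hc
      have Pxy : Seg T x y := ⟨hxy, hf⟩
      have := h.nc Pxy Ppq
      have := h.nc Ppq Pxy
      have := h.nc Pxy Pqr
      have := h.nc Pqr Pxy
      have := h.nc Pxy Prs
      have := h.nc Prs Pxy
      have := h.nc Pxy Pps
      have := h.nc Pps Pxy
      omega
    · intro f hf hfT hfc
      obtain ⟨x, y, hxy, rfl, h1, h2, h3, h4, h5⟩ := key f hf hfT hfc
      rw [crosses_pair hxy (by omega)] at h1 h2 h3 h4 h5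
      rw [pair_inj hxy (by omega)]
      omega

lemma not_crosses_self {n : ℕ} {e : Finset ℕ} (h : IsChord n e) : ¬ Crosses e e := by
  obtain ⟨x, y, hxy, -, rfl⟩ := h.exists_pair
  rw [crosses_pair hxy hxy]
  omega

lemma exists_flip {n : ℕ} (hn : 3 ≤ n) {T : Finset (Finset ℕ)} (hT : IsTriangulation n T)
    {e : Finset ℕ} (heT : e ∈ T) (he : ¬ IsBoundaryEdge n e) :
    ∃ T', IsTriangulation n T' ∧ T \ T' = {e} ∧ (T' \ T).card = 1 := by
  obtain ⟨e', hch, hcr, hcomp, huniq⟩ := exists_dual hn hT heT he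
  have he'T : e' ∉ T := fun h => hT.2.2.1 _ heT _ h hcr
  have hne : e ≠ e' := fun h => he'T (h ▸ heT)
  refine ⟨insert e' (T.erase e), ⟨?_, ?_, ?_, ?_⟩, ?_, ?_⟩
  · intro f hf
    rcases Finset.mem_insert.1 hf with rfl | hf
    · exact hch
    · exact hT.1 f (Finset.mem_of_mem_erase hf)
  · intro i hi
    exact Finset.mem_insert_of_mem
      (Finset.mem_erase.2 ⟨fun h => he ⟨i, hi, h.symm⟩, hT.2.1 i hi⟩)
  · intro f hf g hg hc
    rw [Finset.mem_insert, Finset.mem_erase] at hf hg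
    rcases hf with rfl | ⟨hf1, hf2⟩ <;> rcases hg with rfl | ⟨hg1, hg2⟩
    · exact not_crosses_self hch hc
    · exact hcomp g hg2 hg1 hc
    · exact hcomp f hf2 hf1 hc.symm
    · exact hT.2.2.1 f hf2 g hg2 hc
  · intro f hf hfT'
    by_contra hcon
    push Not at hcon
    rw [Finset.mem_insert, Finset.mem_erase] at hfT'
    push Not at hfT'
    by_cases hfe : f = e
    · subst hfe
      exact hcon e' (Finset.mem_insert_self _ _) hcr
    · exact hfT'.1 (huniq f hf.1 (hfT'.2 hfe) fun g hg hge =>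
        hcon g (Finset.mem_insert_of_mem (Finset.mem_erase.2 ⟨hge, hg⟩)))
  · ext f
    simp only [Finset.mem_sdiff, Finset.mem_insert, Finset.mem_erase, Finset.mem_singleton]
    constructor
    · rintro ⟨h1, h2⟩
      by_contra h3
      exact h2 (Or.inr ⟨h3, h1⟩)
    · rintro rfl
      exact ⟨heT, by tauto⟩
  · rw [Finset.card_eq_one]
    refine ⟨e', ?_⟩
    ext f
    simp only [Finset.mem_sdiff, Finset.mem_insert, Finset.mem_erase, Finset.mem_singleton]
    constructor
    · tauto
    · rintro rfl
      exact ⟨Or.inl rfl, he'T⟩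

lemma flip_unique {n : ℕ} (hn : 3 ≤ n) {T T₁ T₂ : Finset (Finset ℕ)} (hT : IsTriangulation n T)
    (hT₁ : IsTriangulation n T₁) (hT₂ : IsTriangulation n T₂)
    {e : Finset ℕ} (heT : e ∈ T) (he : ¬ IsBoundaryEdge n e)
    (h₁ : T \ T₁ = {e}) (h₂ : T \ T₂ = {e}) (c₁ : (T₁ \ T).card = 1) (c₂ : (T₂ \ T).card = 1) :
    T₁ = T₂ := by
  obtain ⟨e', -, -, -, huniq⟩ := exists_dual hn hT heT he
  have key : ∀ T' : Finset (Finset ℕ), IsTriangulation n T' → T \ T' = {e} → (T' \ T).card = 1 →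
      T' = insert e' (T.erase e) := by
    intro T' hT' h c
    obtain ⟨g, hg⟩ := Finset.card_eq_one.1 c
    have hmem : ∀ f, f ∈ T ∧ f ∉ T' ↔ f = e := fun f => by
      rw [← Finset.mem_sdiff, h, Finset.mem_singleton]
    have hmem' : ∀ f, f ∈ T' ∧ f ∉ T ↔ f = g := fun f => by
      rw [← Finset.mem_sdiff, hg, Finset.mem_singleton]
    obtain ⟨hg1, hg2⟩ := (hmem' g).2 rfl
    have hge : g = e' := huniq g (hT'.1 g hg1) hg2 fun f hf hfe =>
      hT'.2.2.1 g hg1 f (by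
        by_contra hf'
        exact hfe ((hmem f).1 ⟨hf, hf'⟩))
    ext f
    rw [Finset.mem_insert, Finset.mem_erase, ← hge]
    have := hmem f
    have := hmem' f
    tauto
  rw [key T₁ hT₁ h₁ c₁, key T₂ hT₂ h₂ c₂]

/-! ### Neighbours correspond to diagonals -/

/-- For every `n ≥ 3`, the associahedron `𝒜ₙ` is `(n-3)`-regular: every triangulation of
the `n`-gon has exactly `n - 3` neighbours. -/
theorem associahedron_regular (n : ℕ) (hn : 3 ≤ n)
    (T : {T : Finset (Finset ℕ) // IsTriangulation n T}) :
    ((Associahedron n).neighborSet T).Finite ∧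
      ((Associahedron n).neighborSet T).ncard = n - 3 := by
  have h := T.2.isTri hn
  -- `below` excludes the edges `(i, i + 1)`, and erasing the base leaves exactly the diagonals
  set D : Finset (ℕ × ℕ) := (below (Seg T.1) 0 (n - 1)).erase (0, n - 1) with hD
  have hDmem : ∀ x y, (x, y) ∈ D ↔ x < y ∧ y < n ∧ {x, y} ∈ T.1 ∧ ¬ IsBoundaryEdge n {x, y} := by
    intro x y
    rw [hD, Finset.mem_erase, mem_below, Ne, Prod.mk.injEq]
    constructor
    · rintro ⟨h1, -, h2, h3, h4⟩
      refine ⟨h4.1, by omega, h4.2, ?_⟩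
      rw [isBoundaryEdge_pair h4.1 (by omega)]
      omega
    · rintro ⟨h1, h2, h3, h4⟩
      rw [isBoundaryEdge_pair h1 h2] at h4
      exact ⟨by omega, by omega, by omega, by omega, h1, h3⟩
  have hcard : D.card = n - 3 := by
    rw [hD, Finset.card_erase_of_mem (mem_below.2 ⟨by omega, by omega, by omega, h.base⟩),
      h.card_below _ _ _ rfl h.base]
    omega
  have hflip : ∀ z : ℕ × ℕ, z ∈ D → ∃ T' : {T : Finset (Finset ℕ) // IsTriangulation n T},
      T.1 \ T'.1 = {{z.1, z.2}} ∧ (T'.1 \ T.1).card = 1 := by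
    rintro ⟨x, y⟩ hz
    obtain ⟨-, -, h3, h4⟩ := (hDmem x y).1 hz
    obtain ⟨T', hT', h5, h6⟩ := exists_flip hn T.2 h3 h4
    exact ⟨⟨T', hT'⟩, h5, h6⟩
  have : Nonempty {T : Finset (Finset ℕ) // IsTriangulation n T} := ⟨T⟩
  choose! F hF using hflip
  have himg : (Associahedron n).neighborSet T = F '' (D : Set (ℕ × ℕ)) := by
    ext T'
    rw [SimpleGraph.mem_neighborSet, Associahedron, SimpleGraph.fromRel_adj]
    constructor
    · rintro ⟨-, hor⟩
      have hc : (T.1 \ T'.1).card = 1 ∧ (T'.1 \ T.1).card = 1 := by tauto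
      obtain ⟨e, he⟩ := Finset.card_eq_one.1 hc.1
      have hmem : e ∈ T.1 \ T'.1 := he ▸ Finset.mem_singleton_self e
      obtain ⟨heT, heT'⟩ := Finset.mem_sdiff.1 hmem
      obtain ⟨x, y, hxy, hy, rfl⟩ := (T.2.1 e heT).exists_pair
      have hb : ¬ IsBoundaryEdge n {x, y} := fun hb => heT' (T'.2.mem_of_isBoundaryEdge hb)
      have hz : (x, y) ∈ D := (hDmem x y).2 ⟨hxy, hy, heT, hb⟩
      refine ⟨(x, y), hz, Subtype.ext ?_⟩
      exact flip_unique hn T.2 (F (x, y)).2 T'.2 heT hb (hF _ hz).1 he (hF _ hz).2 hc.2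
    · rintro ⟨z, hz, rfl⟩
      obtain ⟨h1, h2⟩ := hF z hz
      refine ⟨?_, Or.inl ⟨by rw [h1, Finset.card_singleton], h2⟩⟩
      intro heq
      rw [← heq, Finset.sdiff_self] at h2
      simp at h2
  have hinj : Set.InjOn F (D : Set (ℕ × ℕ)) := by
    rintro ⟨x, y⟩ hz ⟨u, v⟩ hw heq
    have h1 := (hF _ hz).1
    rw [heq, (hF _ hw).1, Finset.singleton_inj,
      pair_inj ((hDmem u v).1 hw).1 ((hDmem x y).1 hz).1] at h1
    rw [Prod.mk.injEq]
    exact ⟨h1.1.symm, h1.2.symm⟩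
  rw [himg]
  refine ⟨D.finite_toSet.image F, ?_⟩
  rw [hinj.ncard_image, Set.ncard_coe_finset, hcard]
end
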